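/- A numerical semigroup S is a MANS-semigroup with embedding dimension e(S) = 3 if and only if S = ⟨m, am+1, bm+t⟩ for some natural numbers m, a, b, t with m ≥ 3, a ≥ 1, t ∈ {2, …, m−1}, and (t−1)(am+1) < bm+t < t(am+1). -/

import Mathlib

/-- `S ⊆ ℕ` is a numerical semigroup: contains `0`, closed under addition,
and has finite complement in `ℕ`. -/
def IsNumSgp (S : Set ℕ) : Prop :=
  0 ∈ S ∧ (∀ a ∈ S, ∀ b ∈ S, a + b ∈ S) ∧ Sᶜ.Finite

/-- `⟨A⟩`: the additive submonoid of `ℕ` generated by `A`, viewed as a set. -/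
def gen (A : Set ℕ) : Set ℕ := (AddSubmonoid.closure A : Set ℕ)

/-- The multiplicity `m(S)`: the least nonzero element of `S`. -/
noncomputable def nsMult (S : Set ℕ) : ℕ := sInf {x | x ∈ S ∧ x ≠ 0}

/-- The minimal system of generators of `S`: the nonzero elements of `S` that are
not a sum of two nonzero elements of `S`. -/
def msg (S : Set ℕ) : Set ℕ :=
  {x | x ∈ S ∧ x ≠ 0 ∧ ∀ a ∈ S, a ≠ 0 → ∀ b ∈ S, b ≠ 0 → x ≠ a + b}

/-- The ratio `r(S)`: the second smallest minimal generator of `S`. -/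
noncomputable def nsRatio (S : Set ℕ) : ℕ := sInf (msg S \ {nsMult S})

/-- The maximum minimal generator `M(S)`. -/
noncomputable def nsMaxGen (S : Set ℕ) : ℕ := sSup (msg S)

/-- The Apéry set `Ap(S, n) = {s ∈ S : s - n ∉ S}`. -/
def AperySet (S : Set ℕ) (n : ℕ) : Set ℕ :=
  {s | s ∈ S ∧ ¬ ∃ y ∈ S, y + n = s}

/-- `w(i)`: the least element of `S` congruent to `i` modulo `n`. -/
noncomputable def aperyW (S : Set ℕ) (n i : ℕ) : ℕ :=
  sInf {s | s ∈ S ∧ s % n = i % n}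

/-- A MANS-semigroup: a numerical semigroup whose Apéry set with respect to the
multiplicity is monotone, i.e. `w(1) < w(2) < ⋯ < w(m(S) - 1)`. -/
def IsMANS (S : Set ℕ) : Prop :=
  IsNumSgp S ∧ ∀ i : ℕ, 0 < i → i + 1 < nsMult S →
    aperyW S (nsMult S) i < aperyW S (nsMult S) (i + 1)

/-- The Frobenius number `F(S)`: the greatest integer not in `S`. -/
noncomputable def nsFrob (S : Set ℕ) : ℕ := sSup {x | x ∉ S}

/-- The genus `g(S)`: the number of gaps of `S`. -/
noncomputable def nsGenus (S : Set ℕ) : ℕ := Set.ncard {x | x ∉ S}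

/-- The set of pseudo-Frobenius numbers of `S`: integers `x ∉ S` such that
`x + s ∈ S` for every nonzero `s ∈ S`. -/
def nsPF (S : Set ℕ) : Set ℤ :=
  {x : ℤ | x ∉ ((Nat.cast : ℕ → ℤ) '' S) ∧
    ∀ s ∈ S, s ≠ 0 → x + (s : ℤ) ∈ ((Nat.cast : ℕ → ℤ) '' S)}

/-- The type `t(S)`: the number of pseudo-Frobenius numbers of `S`. -/
noncomputable def nsType (S : Set ℕ) : ℕ := (nsPF S).ncard

/-- `S` is pseudo-symmetric iff `F(S) = 2 g(S) - 2`. -/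
def IsPseudoSymmetric (S : Set ℕ) : Prop :=
  (nsFrob S : ℤ) = 2 * (nsGenus S : ℤ) - 2

/-!
Write `m = m(S)` and `g = w(1)`. If `S` is a MANS-semigroup with three minimal generators, then `m`
and `g` are two of them; let `h ≡ t (mod m)` be the third. Since `t * g ∈ S` lies in the class of
`h`, minimality of `h` gives `h < t * g`, while `w(t - 1) < w(t) ≤ h` forces `w(t - 1) ∈ ⟨m, g⟩`,
hence `(t - 1) * g ≤ w(t - 1) < h`.

Conversely, `x * m + y * g + z * h` lies in the class of `y + z * t`, so `w(i)` is the least cost of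
a value congruent to `i` when a coin of value `1` costs `g` and one of value `t` costs `h`. For
`(t - 1) * g < h < t * g` it is cheapest to pay exactly `i`, using as many `t`-coins as possible,
and the resulting cost increases with `i`.
-/

open Filter

section MinimalGenerators

variable {M : AddSubmonoid ℕ} {A : Set ℕ} {k n x y : ℕ}

theorem gen_msg (M : AddSubmonoid ℕ) : gen (msg (M : Set ℕ)) = M := by
  refine Set.Subset.antisymm (AddSubmonoid.closure_le.2 fun x hx ↦ hx.1) fun x hx ↦ ?_
  induction x using Nat.strong_induction_on with
  | _ x ih =>
    by_cases hx0 : x = 0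
    · exact hx0 ▸ zero_mem (AddSubmonoid.closure (msg M))
    by_cases hmsg : x ∈ msg M
    · exact AddSubmonoid.subset_closure hmsg
    obtain ⟨a, ha, ha0, b, hb, hb0, rfl⟩ :
        ∃ a ∈ M, a ≠ 0 ∧ ∃ b ∈ M, b ≠ 0 ∧ x = a + b := by
      by_contra! hirred
      exact hmsg ⟨hx, hx0, hirred⟩
    exact add_mem (S := AddSubmonoid ℕ) (ih a (by lia) ha) (ih b (by lia) hb)

theorem msg_gen_subset (A : Set ℕ) : msg (gen A) ⊆ A := by
  intro x hx
  have hxA : x ∈ AddSubmonoid.closure A := hx.1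
  induction hxA using AddSubmonoid.closure_induction with
  | mem x hxA => exact hxA
  | zero => exact absurd rfl hx.2.1
  | add a b ha hb iha ihb =>
    rcases eq_or_ne a 0 with rfl | ha0
    · rw [zero_add] at hx ⊢
      exact ihb hx
    rcases eq_or_ne b 0 with rfl | hb0
    · rw [add_zero] at hx ⊢
      exact iha hx
    exact absurd rfl (hx.2.2 a ha ha0 b hb hb0)

theorem mem_gen_of_mem_gen_insert_of_lt (hx : x ∈ gen (insert n A)) (hxn : x < n) :
    x ∈ gen A := by
  have hx' : x ∈ AddSubmonoid.closure (insert n A) := hx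
  induction hx' using AddSubmonoid.closure_induction with
  | mem x hxA => exact AddSubmonoid.subset_closure (hxA.resolve_left hxn.ne)
  | zero => exact zero_mem (AddSubmonoid.closure A)
  | add a b ha hb iha ihb =>
    exact add_mem (S := AddSubmonoid ℕ) (iha ha (by lia)) (ihb hb (by lia))

theorem mem_msg_gen_insert (hn : n ∉ gen A) : n ∈ msg (gen (insert n A)) := by
  refine ⟨AddSubmonoid.subset_closure (Set.mem_insert n A), ?_, ?_⟩
  · rintro rfl
    exact hn (zero_mem (AddSubmonoid.closure A))
  · rintro a ha ha0 b hb hb0 rfl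
    exact hn (add_mem (S := AddSubmonoid ℕ) (mem_gen_of_mem_gen_insert_of_lt ha (by lia))
      (mem_gen_of_mem_gen_insert_of_lt hb (by lia)))

theorem mul_notMem_msg (hx : x ∈ M) (hk : 2 ≤ k) : k * x ∉ msg M := by
  rintro ⟨-, hkx, hirred⟩
  have hx0 : x ≠ 0 := right_ne_zero_of_mul hkx
  obtain ⟨k, rfl⟩ := Nat.exists_eq_add_of_le' hk
  exact hirred x hx hx0 ((k + 1) * x) (nsmul_mem hx (k + 1)) (by positivity) (by ring)

theorem le_of_mem_msg_of_modEq (hn : n ∈ M) (hx : x ∈ M) (hx0 : x ≠ 0) (hy : y ∈ msg M)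
    (hxy : x ≡ y [MOD n]) : y ≤ x := by
  by_contra! hlt
  obtain ⟨k, hk⟩ := (Nat.modEq_iff_dvd' hlt.le).1 hxy
  exact hy.2.2 x hx hx0 (n * k) (mul_comm k n ▸ nsmul_mem hn k) (by lia) (by lia)

theorem eq_of_mem_msg_of_modEq (hn : n ∈ M) (hx : x ∈ msg M) (hy : y ∈ msg M)
    (hxy : x ≡ y [MOD n]) : x = y :=
  (le_of_mem_msg_of_modEq hn hy.1 hy.2.1 hx hxy.symm).antisymm
    (le_of_mem_msg_of_modEq hn hx.1 hx.2.1 hy hxy)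

theorem lt_mul_of_mem_msg (hn : n ∈ M) (hx : x ∈ M) (hx0 : x ≠ 0) (hy : y ∈ msg M) (hk : 2 ≤ k)
    (hxy : k * x ≡ y [MOD n]) : y < k * x := by
  have hkx0 : k * x ≠ 0 := mul_ne_zero (by lia) hx0
  refine (le_of_mem_msg_of_modEq hn (nsmul_mem hx k) hkx0 hy hxy).lt_of_ne ?_
  rintro rfl
  exact mul_notMem_msg hx hk hy

theorem ncard_msg_le (hn : n ∈ M) (hn0 : n ≠ 0) : (msg M).ncard ≤ n := by
  simpa using Set.ncard_le_ncard_of_injOn (t := Set.Iio n) (· % n)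
    (fun x _ ↦ Nat.mod_lt x (Nat.pos_of_ne_zero hn0))
    (fun _ hx _ hy hxy ↦ eq_of_mem_msg_of_modEq hn hx hy hxy)

theorem le_of_mem_gen (hmin : ∀ a ∈ A, n ≤ a) (hx : x ∈ gen A) (hx0 : x ≠ 0) : n ≤ x := by
  have hxA : x ∈ AddSubmonoid.closure A := hx
  induction hxA using AddSubmonoid.closure_induction with
  | mem x hxA => exact hmin x hxA
  | zero => exact absurd rfl hx0
  | add a b ha hb iha ihb =>
    rcases eq_or_ne a 0 with rfl | ha0
    · simpa using ihb hb (by simpa using hx0)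
    · exact (iha ha ha0).trans (Nat.le_add_right a b)

theorem nsMult_gen (hn : n ∈ A) (hn0 : n ≠ 0) (hmin : ∀ a ∈ A, n ≤ a) : nsMult (gen A) = n :=
  IsLeast.csInf_eq
    ⟨⟨AddSubmonoid.subset_closure hn, hn0⟩, fun _ hx ↦ le_of_mem_gen hmin hx.1 hx.2⟩

theorem isNumSgp_gen (hA : Nat.setGcd A = 1) : IsNumSgp (gen A) := by
  refine ⟨zero_mem (AddSubmonoid.closure A),
    fun a ha b hb ↦ add_mem (S := AddSubmonoid ℕ) ha hb, ?_⟩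
  obtain ⟨N, hN⟩ := Nat.exists_mem_closure_of_ge A
  exact (Set.finite_Iio N).subset fun n hn ↦
    not_le.1 fun hNn ↦ hn (hN n hNn (hA ▸ one_dvd n))

end MinimalGenerators

section NumericalSemigroup

variable {S : Set ℕ} {n : ℕ}

theorem IsNumSgp.exists_addSubmonoid (hS : IsNumSgp S) : ∃ M : AddSubmonoid ℕ, (M : Set ℕ) = S :=
  ⟨{ carrier := S, zero_mem' := hS.1, add_mem' := fun ha hb ↦ hS.2.1 _ ha _ hb }, rfl⟩

theorem IsNumSgp.eventually_mem (hS : IsNumSgp S) : ∀ᶠ n in atTop, n ∈ S :=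
  Nat.cofinite_eq_atTop ▸ hS.2.2

theorem IsNumSgp.isLeast_nsMult (hS : IsNumSgp S) :
    IsLeast {x | x ∈ S ∧ x ≠ 0} (nsMult S) := by
  obtain ⟨x, hx, hx0⟩ := (hS.eventually_mem.and (eventually_ne_atTop 0)).exists
  exact ⟨Nat.sInf_mem ⟨x, hx, hx0⟩, fun _ ↦ Nat.sInf_le⟩

theorem IsNumSgp.isLeast_aperyW (hS : IsNumSgp S) (hn : n ≠ 0) (i : ℕ) :
    IsLeast {s | s ∈ S ∧ s ≡ i [MOD n]} (aperyW S n i) := by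
  obtain ⟨s, hsi, hs⟩ := ((Nat.frequently_modEq hn i).and_eventually hS.eventually_mem).exists
  exact ⟨Nat.sInf_mem ⟨s, hs, hsi⟩, fun _ ↦ Nat.sInf_le⟩

theorem IsNumSgp.nsMult_mem_msg (hS : IsNumSgp S) : nsMult S ∈ msg S := by
  obtain ⟨⟨hm, hm0⟩, hmin⟩ := hS.isLeast_nsMult
  refine ⟨hm, hm0, fun a ha ha0 b _ hb0 hab ↦ ?_⟩
  have hma : nsMult S ≤ a := hmin ⟨ha, ha0⟩
  lia

theorem IsMANS.strictMonoOn_aperyW (hS : IsMANS S) :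
    StrictMonoOn (aperyW S (nsMult S)) (Set.Ioo 0 (nsMult S)) :=
  strictMonoOn_of_lt_add_one Set.ordConnected_Ioo fun i _ hi hi' ↦ hS.2 i hi.1 hi'.2

theorem IsMANS.aperyW_one_le (hS : IsMANS S) {s : ℕ} (hs : s ∈ S) (hsm : ¬ nsMult S ∣ s) :
    aperyW S (nsMult S) 1 ≤ s := by
  have hm0 : nsMult S ≠ 0 := hS.1.isLeast_nsMult.1.2
  have hr0 : 0 < s % nsMult S := Nat.emod_pos_of_not_dvd hsm
  have hrm : s % nsMult S < nsMult S := Nat.mod_lt s (Nat.pos_of_ne_zero hm0)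
  calc aperyW S (nsMult S) 1
      ≤ aperyW S (nsMult S) (s % nsMult S) :=
        hS.strictMonoOn_aperyW.monotoneOn ⟨one_pos, by lia⟩ ⟨hr0, hrm⟩ hr0
    _ ≤ s := (hS.1.isLeast_aperyW hm0 _).2 ⟨hs, (Nat.mod_modEq s _).symm⟩

theorem IsMANS.aperyW_one_mem_msg (hS : IsMANS S) (hm : 1 < nsMult S) :
    aperyW S (nsMult S) 1 ∈ msg S := by
  obtain ⟨⟨hgS, hg⟩, -⟩ := hS.1.isLeast_aperyW (by lia : nsMult S ≠ 0) 1
  have hndvd : ¬ nsMult S ∣ aperyW S (nsMult S) 1 := fun hdvd ↦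
    hm.ne' (Nat.dvd_one.1 ((hg.dvd_iff dvd_rfl).1 hdvd))
  refine ⟨hgS, fun hg0 ↦ hndvd (hg0 ▸ dvd_zero _), fun a ha ha0 b hb hb0 hab ↦ ?_⟩
  by_cases hdvd : nsMult S ∣ a
  · have hgb := hS.aperyW_one_le hb fun hdvd' ↦ hndvd (hab ▸ dvd_add hdvd hdvd')
    lia
  · have hga := hS.aperyW_one_le ha hdvd
    lia

end NumericalSemigroup

section GreedyCost

variable {t g h y : ℕ}

/-- The cost of paying the value `n` greedily with coins of value `t` and `1`, which cost `h` and
`g` each. For suitable `t`, `g`, `h` these are the Apéry elements of `⟨m, g, h⟩`. -/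
def greedyCost (t g h n : ℕ) : ℕ := n / t * h + n % t * g

theorem greedyCost_add_mul (hy : y < t) (z : ℕ) :
    greedyCost t g h (y + z * t) = z * h + y * g := by
  rw [greedyCost, Nat.add_mul_div_right _ _ (by lia), Nat.div_eq_of_lt hy, zero_add,
    Nat.add_mul_mod_self_right, Nat.mod_eq_of_lt hy]

theorem greedyCost_strictMono (ht : 0 < t) (hg : 0 < g) (hlow : (t - 1) * g < h) :
    StrictMono (greedyCost t g h) := by
  refine strictMono_nat_of_lt_succ fun n ↦ ?_
  obtain ⟨r, q, hr, rfl⟩ : ∃ r q, r < t ∧ n = r + q * t :=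
    ⟨n % t, n / t, Nat.mod_lt n ht, (Nat.mod_add_div' n t).symm⟩
  rw [greedyCost_add_mul hr]
  rcases Nat.lt_or_eq_of_le (Nat.succ_le_of_lt hr) with hr' | rfl
  · rw [add_right_comm, greedyCost_add_mul hr', Nat.succ_mul]
    lia
  · rw [show r + q * r.succ + 1 = 0 + (q + 1) * r.succ by lia, greedyCost_add_mul ht, Nat.succ_mul]
    simp only [Nat.succ_sub_one] at hlow
    lia

theorem greedyCost_le (ht : 0 < t) (hup : h ≤ t * g) (y z : ℕ) :
    greedyCost t g h (y + z * t) ≤ y * g + z * h := by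
  obtain ⟨r, q, hr, rfl⟩ : ∃ r q, r < t ∧ y = r + q * t :=
    ⟨y % t, y / t, Nat.mod_lt y ht, (Nat.mod_add_div' y t).symm⟩
  calc greedyCost t g h (r + q * t + z * t)
      = q * h + (z * h + r * g) := by
        rw [add_assoc, ← add_mul, greedyCost_add_mul hr]
        ring
    _ ≤ q * (t * g) + (z * h + r * g) := by gcongr
    _ = (r + q * t) * g + z * h := by ring

end GreedyCost

section GenTriple

variable {m g h t i x y z n : ℕ}

theorem mem_gen_triple : n ∈ gen {m, g, h} ↔ ∃ x y z : ℕ, x * m + y * g + z * h = n := by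
  change n ∈ AddSubmonoid.closure (insert m {g, h}) ↔ _
  simp only [Set.insert_eq m, AddSubmonoid.closure_union, AddSubmonoid.mem_sup,
    AddSubmonoid.mem_closure_singleton, AddSubmonoid.mem_closure_pair, smul_eq_mul,
    exists_exists_eq_and, exists_exists_exists_and_eq, add_assoc]

theorem mul_add_mul_add_mul_modEq (hg : g ≡ 1 [MOD m]) (hh : h ≡ t [MOD m]) (x y z : ℕ) :
    x * m + y * g + z * h ≡ y + z * t [MOD m] := by
  have hx : x * m ≡ 0 [MOD m] := Nat.modEq_zero_iff_dvd.2 (dvd_mul_left m x)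
  simpa using (hx.add (hg.mul_left y)).add (hh.mul_left z)

theorem le_add_mul_of_modEq (hg : g ≡ 1 [MOD m]) (hh : h ≡ t [MOD m]) (hi : i < m)
    (hxyz : x * m + y * g + z * h ≡ i [MOD m]) : i ≤ y + z * t := by
  have hyz : i ≡ y + z * t [MOD m] := hxyz.symm.trans (mul_add_mul_add_mul_modEq hg hh x y z)
  calc i = (y + z * t) % m := by rw [← hyz, Nat.mod_eq_of_lt hi]
    _ ≤ y + z * t := Nat.mod_le _ m

theorem aperyW_gen_triple (hg : g ≡ 1 [MOD m]) (hh : h ≡ t [MOD m]) (hlow : (t - 1) * g < h)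
    (hup : h ≤ t * g) (hi : i < m) : aperyW (gen {m, g, h}) m i = greedyCost t g h i := by
  have ht : 0 < t := Nat.pos_of_mul_pos_right (by lia : 0 < t * g)
  have hg0 : 0 < g := Nat.pos_of_mul_pos_left (by lia : 0 < t * g)
  refine IsLeast.csInf_eq ⟨⟨mem_gen_triple.2 ⟨0, i % t, i / t, ?_⟩, ?_⟩, ?_⟩
  · rw [greedyCost]
    ring
  · have hmod := mul_add_mul_add_mul_modEq hg hh 0 (i % t) (i / t)
    rwa [Nat.mod_add_div', zero_mul, zero_add, add_comm] at hmod
  · rintro s ⟨hs, hsi⟩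
    obtain ⟨x, y, z, rfl⟩ := mem_gen_triple.1 hs
    calc greedyCost t g h i
        ≤ greedyCost t g h (y + z * t) :=
          (greedyCost_strictMono ht hg0 hlow).monotone (le_add_mul_of_modEq hg hh hi hsi)
      _ ≤ y * g + z * h := greedyCost_le ht hup y z
      _ ≤ x * m + y * g + z * h := by lia

theorem mul_le_of_mem_gen_pair (hg : g ≡ 1 [MOD m]) (hi : i < m) (hn : n ∈ gen {m, g})
    (hni : n ≡ i [MOD m]) : i * g ≤ n := by
  obtain ⟨x, y, rfl⟩ := (AddSubmonoid.mem_closure_pair m g n).1 hn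
  simp only [smul_eq_mul] at hni ⊢
  have hiy : i ≤ y := by
    simpa using le_add_mul_of_modEq (x := x) (z := 0) hg (Nat.ModEq.refl 0) hi (by simpa using hni)
  calc i * g ≤ y * g := by gcongr
    _ ≤ x * m + y * g := Nat.le_add_left _ _

theorem isMANS_gen_triple (hg : g ≡ 1 [MOD m]) (hh : h ≡ t [MOD m]) (hm : m ≠ 0) (hmg : m ≤ g)
    (hmh : m ≤ h) (hlow : (t - 1) * g < h) (hup : h ≤ t * g) : IsMANS (gen {m, g, h}) := by
  have hgcd : Nat.setGcd {m, g, h} = 1 := by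
    have hgm : Nat.gcd g m = 1 := by rw [hg.gcd_eq, Nat.gcd_one_left]
    exact Nat.dvd_one.1 (hgm ▸ Nat.dvd_gcd (Nat.setGcd_dvd_of_mem (by simp))
      (Nat.setGcd_dvd_of_mem (by simp)))
  have hmult : nsMult (gen {m, g, h}) = m :=
    nsMult_gen (Set.mem_insert _ _) hm (by rintro a (rfl | rfl | rfl) <;> lia)
  have ht : 0 < t := Nat.pos_of_mul_pos_right (by lia : 0 < t * g)
  refine ⟨isNumSgp_gen hgcd, fun i _ hi ↦ ?_⟩
  rw [hmult] at hi ⊢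
  rw [aperyW_gen_triple hg hh hlow hup (by lia), aperyW_gen_triple hg hh hlow hup hi]
  exact greedyCost_strictMono ht (by lia) hlow (Nat.lt_succ_self i)

theorem msg_gen_triple (hg : g ≡ 1 [MOD m]) (hh : h ≡ t [MOD m]) (hm : 1 < m) (hmg : m < g)
    (hgh : g < h) (htm : t < m) (hup : h < t * g) : msg (gen {m, g, h}) = {m, g, h} := by
  have hm_not : m ∉ gen {g, h} := fun hmem ↦
    hmg.not_ge (le_of_mem_gen (by rintro a (rfl | rfl) <;> lia) hmem (by lia))
  have hg_not : g ∉ gen {m, h} := fun hmem ↦ by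
    rw [Set.pair_comm] at hmem
    obtain ⟨k, rfl⟩ :=
      AddSubmonoid.mem_closure_singleton.1 (mem_gen_of_mem_gen_insert_of_lt hmem hgh)
    exact hm.ne' (Nat.dvd_one.1 ((hg.dvd_iff dvd_rfl).1 (dvd_mul_left m k)))
  have hh_not : h ∉ gen {m, g} := fun hmem ↦
    hup.not_ge (mul_le_of_mem_gen_pair hg htm hmem hh)
  have hm_mem : m ∈ msg (gen {m, g, h}) := mem_msg_gen_insert hm_not
  have hg_mem : g ∈ msg (gen {m, g, h}) := by
    rw [Set.insert_comm]
    exact mem_msg_gen_insert hg_not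
  have hh_mem : h ∈ msg (gen {m, g, h}) := by
    rw [Set.pair_comm, Set.insert_comm]
    exact mem_msg_gen_insert hh_not
  refine (msg_gen_subset _).antisymm ?_
  rintro _ (rfl | rfl | rfl) <;> assumption

end GenTriple

section ThreeGenerators

variable {S : Set ℕ} {h t : ℕ}

theorem exists_eq_insert_pair_of_ncard_eq_three {α : Type*} {s : Set α} {a b : α}
    (hs : s.ncard = 3) (ha : a ∈ s) (hb : b ∈ s) (hab : a ≠ b) :
    ∃ c, c ≠ a ∧ c ≠ b ∧ s = {a, b, c} := by
  have hpair : {a, b} ⊆ s := Set.pair_subset ha hb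
  have hcard : (s \ {a, b}).ncard = 1 := by
    rw [Set.ncard_sdiff hpair, hs, Set.ncard_pair hab]
  obtain ⟨c, hc⟩ := Set.ncard_eq_one.1 hcard
  have hcab : c ∉ ({a, b} : Set α) := (hc.ge (Set.mem_singleton c)).2
  refine ⟨c, fun hca ↦ hcab (.inl hca), fun hcb ↦ hcab (.inr hcb), ?_⟩
  rw [← Set.union_sdiff_cancel hpair, hc, Set.insert_union, Set.singleton_union]

theorem IsMANS.pred_mul_aperyW_one_lt (hS : IsMANS S)
    (hgen : S = gen {nsMult S, aperyW S (nsMult S) 1, h}) (hh : h ≡ t [MOD nsMult S])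
    (ht : 2 ≤ t) (htm : t < nsMult S) : (t - 1) * aperyW S (nsMult S) 1 < h := by
  have hm0 : nsMult S ≠ 0 := by lia
  have hhS : h ∈ S := by
    rw [hgen]
    exact AddSubmonoid.subset_closure (by simp)
  obtain ⟨⟨hwS, hw⟩, -⟩ := hS.1.isLeast_aperyW hm0 (t - 1)
  have hwh : aperyW S (nsMult S) (t - 1) < h :=
    calc aperyW S (nsMult S) (t - 1)
        < aperyW S (nsMult S) t :=
          hS.strictMonoOn_aperyW ⟨by lia, by lia⟩ ⟨by lia, htm⟩ (by lia)
      _ ≤ h := (hS.1.isLeast_aperyW hm0 t).2 ⟨hhS, hh⟩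
  have hw_insert : aperyW S (nsMult S) (t - 1) ∈
      gen (insert h {nsMult S, aperyW S (nsMult S) 1}) := by
    rw [Set.insert_comm, Set.pair_comm h, ← hgen]
    exact hwS
  have hw_pair : aperyW S (nsMult S) (t - 1) ∈ gen {nsMult S, aperyW S (nsMult S) 1} :=
    mem_gen_of_mem_gen_insert_of_lt hw_insert hwh
  calc (t - 1) * aperyW S (nsMult S) 1
      ≤ aperyW S (nsMult S) (t - 1) :=
        mul_le_of_mem_gen_pair (hS.1.isLeast_aperyW hm0 1).1.2 (by lia) hw_pair hw
    _ < h := hwh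

theorem IsMANS.exists_eq_gen_triple (hS : IsMANS S) (hcard : (msg S).ncard = 3) :
    ∃ m g h t : ℕ, g ≡ 1 [MOD m] ∧ h ≡ t [MOD m] ∧ m ≤ g ∧ 2 ≤ t ∧ t < m ∧
      (t - 1) * g < h ∧ h < t * g ∧ S = gen {m, g, h} := by
  obtain ⟨M, rfl⟩ := hS.1.exists_addSubmonoid
  obtain ⟨⟨hmM, hm0⟩, hmin⟩ := hS.1.isLeast_nsMult
  have hm3 : 3 ≤ nsMult M := hcard ▸ ncard_msg_le hmM hm0
  have hm_msg : nsMult M ∈ msg M := hS.1.nsMult_mem_msg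
  have hg_msg : aperyW M (nsMult M) 1 ∈ msg M := hS.aperyW_one_mem_msg (by lia)
  have hg1 : aperyW M (nsMult M) 1 ≡ 1 [MOD nsMult M] := (hS.1.isLeast_aperyW hm0 1).1.2
  set m := nsMult M
  set g := aperyW M m 1
  have hmg : m ≠ g := fun hmg ↦ by
    have hm1 : m = 1 := Nat.dvd_one.1 ((hg1.dvd_iff dvd_rfl).1 hmg.dvd)
    lia
  obtain ⟨h, hhm, hhg, hmsg⟩ := exists_eq_insert_pair_of_ncard_eq_three hcard hm_msg hg_msg hmg
  have hh_msg : h ∈ msg M := hmsg ▸ by simp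
  have hgen : (M : Set ℕ) = gen {m, g, h} := by rw [← hmsg, gen_msg]
  have hht : h ≡ h % m [MOD m] := (Nat.mod_modEq h m).symm
  have ht0 : h % m ≠ 0 := fun ht ↦ hhm <| eq_of_mem_msg_of_modEq hmM hh_msg hm_msg <| by
    simp [Nat.ModEq, ht]
  have ht1 : h % m ≠ 1 := fun ht ↦ hhg <| eq_of_mem_msg_of_modEq hmM hh_msg hg_msg <|
    (ht ▸ hht).trans hg1.symm
  have htm : h % m < m := Nat.mod_lt h (by lia)
  have hmod : h % m * g ≡ h [MOD m] := by simpa using (Nat.mod_modEq h m).mul hg1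
  have hup : h < h % m * g :=
    lt_mul_of_mem_msg hmM hg_msg.1 hg_msg.2.1 hh_msg (by lia) hmod
  exact ⟨m, g, h, h % m, hg1, hht, hmin ⟨hg_msg.1, hg_msg.2.1⟩, by lia, htm,
    hS.pred_mul_aperyW_one_lt hgen hht (by lia) htm, hup, hgen⟩

end ThreeGenerators

theorem stmt9 (S : Set ℕ) :
    (IsMANS S ∧ (msg S).ncard = 3) ↔
      ∃ m a b t : ℕ, 3 ≤ m ∧ 1 ≤ a ∧ 2 ≤ t ∧ t ≤ m - 1 ∧
        (t - 1) * (a * m + 1) < b * m + t ∧ b * m + t < t * (a * m + 1) ∧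
        S = gen {m, a * m + 1, b * m + t} := by
  constructor
  · rintro ⟨hS, hcard⟩
    obtain ⟨m, g, h, t, hg, hh, hmg, ht, htm, hlow, hup, rfl⟩ := hS.exists_eq_gen_triple hcard
    have hg_eq : g / m * m + 1 = g :=
      Nat.mod_eq_of_modEq hg (by lia : 1 < m) ▸ Nat.div_add_mod' g m
    have hh_eq : h / m * m + t = h := Nat.mod_eq_of_modEq hh htm ▸ Nat.div_add_mod' h m
    refine ⟨m, g / m, h / m, t, by lia, Nat.div_pos hmg (by lia), ht, by lia, ?_⟩
    rw [hg_eq, hh_eq]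
    exact ⟨hlow, hup, rfl⟩
  · rintro ⟨m, a, b, t, hm, ha, ht, htm, hlow, hup, rfl⟩
    have hg : a * m + 1 ≡ 1 [MOD m] := by simp [Nat.ModEq]
    have hh : b * m + t ≡ t [MOD m] := by simp [Nat.ModEq]
    have hmg : m < a * m + 1 := Nat.lt_succ_of_le (Nat.le_mul_of_pos_left m ha)
    have hgh : a * m + 1 < b * m + t :=
      (Nat.le_mul_of_pos_left _ (by lia)).trans_lt hlow
    refine ⟨isMANS_gen_triple hg hh (by lia) hmg.le (hmg.trans hgh).le hlow hup.le, ?_⟩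
    rw [msg_gen_triple hg hh (by lia) hmg hgh (by lia) hup]
    exact Set.ncard_eq_three.2 ⟨_, _, _, hmg.ne, (hmg.trans hgh).ne, hgh.ne, rfl⟩
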